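/- Assume y = Xw* + σε with ε a standard Gaussian vector in ℝ^n and σ > 0. Let Q = (1/n) X^⊤X and let J be the smallest stable set containing Supp(w*). Assume the restricted eigenvalue condition: for all Δ ∈ ℝ^p with Ω^J(Δ_{J^c}) ≤ 3 Ω_J(Δ_J), one has Δ^⊤QΔ ≥ κ‖Δ_J‖_2². Then, for any minimizer ŵ of w ↦ (1/(2n))‖y − Xw‖_2² + λΩ(w), one has Ω(ŵ − w*) ≤ 24 c(J)² λ / (κ ρ(J)²) and (1/n)‖Xŵ − Xw*‖_2² ≤ 36 c(J)² λ² / (κ ρ(J)²), with probability at least 1 − P(Ω*(z) > λ ρ(J) √n / (2σ)), where z is a centered Gaussian vector in ℝ^p with covariance matrix Q. -/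

import Mathlib

/-!
The norm `Ω` is handled through the nonnegative part `SubPoly F` of the submodular polyhedron:
`Ω(w) = max {⟨s, |w|⟩ : s ≥ 0, s(A) ≤ F(A) for all A}`. The greedy vector along a decreasing ordering
of `|w|` attains the maximum (`greedy_subPoly`, `greedy_max`). The triangle inequality, Hölder's
inequality and the decomposition
`Ω_J(w_J) + Ω^J(w_{Jᶜ}) ≤ Ω(w)`, `ρ(J) Ω(w) ≤ ρ(J) Ω_J(w_J) + Ω^J(w_{Jᶜ})`
follow by restricting or concatenating such vectors `s`.

Let `D = ŵ - w*`. Optimality of `ŵ` and Hölder's inequality give, on the event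
`Ω*(Xᵀε / √n) ≤ λ ρ(J) √n / (2σ)`,
`‖XD‖² / n ≤ λ ρ(J) Ω(D) + 2λ (Ω(w*) - Ω(ŵ)) ≤ λ (3 Ω_J(D_J) - Ω^J(D_{Jᶜ}))`.
Hence `Ω^J(D_{Jᶜ}) ≤ 3 Ω_J(D_J)`, the restricted eigenvalue condition applies, and with
`Ω_J(D_J) ≤ c(J) ‖D_J‖₂` it yields `κ ‖D_J‖₂ ≤ 3 λ c(J)`, from which both bounds follow
(`oracle_inequality`), with room to spare in the constants.

The vectors `Xᵀε / √n` and `R g` are linear images of standard Gaussian vectors with the same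
covariance `Q`, so they have the same law (`map_stdGaussianPi_eq`), which gives the probability.
-/

open Finset MeasureTheory
open scoped Classical NNReal

noncomputable section

/-- A set-function on subsets of `α` is submodular:
`F (A ∪ B) + F (A ∩ B) ≤ F A + F B`. -/
def Submodular {α : Type*} [DecidableEq α] (F : Finset α → ℝ) : Prop :=
  ∀ A B : Finset α, F (A ∪ B) + F (A ∩ B) ≤ F A + F B

/-- A set-function is nondecreasing: `A ⊆ B → F A ≤ F B`. -/
def MonotoneF {α : Type*} (F : Finset α → ℝ) : Prop :=
  ∀ ⦃A B : Finset α⦄, A ⊆ B → F A ≤ F B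

/-- A set `A` is stable for `F` if enlarging it strictly increases `F`. -/
def StableSet {α : Type*} (F : Finset α → ℝ) (A : Finset α) : Prop :=
  ∀ B : Finset α, A ⊆ B → A ≠ B → F A < F B

/-- A set `A` is separable for `F` if it can be partitioned into `k ≥ 2` nonempty
disjoint sets on which `F` is additive. -/
def SeparableSet {α : Type*} [DecidableEq α] (F : Finset α → ℝ) (A : Finset α) : Prop :=
  ∃ P : Finset (Finset α), 2 ≤ P.card ∧ (∀ B ∈ P, B.Nonempty) ∧
    (P : Set (Finset α)).PairwiseDisjoint id ∧ P.biUnion id = A ∧ F A = ∑ B ∈ P, F B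

/-- The Lovász extension of a set-function `F`, evaluated via a decreasing ordering
`w_{j_1} ≥ ⋯ ≥ w_{j_p}` of the components of `w`:
`f(w) = ∑ₖ w_{j_k} (F({j_1,…,j_k}) − F({j_1,…,j_{k−1}}))`. -/
noncomputable def lovasz {α : Type*} [Fintype α] [DecidableEq α]
    (F : Finset α → ℝ) (w : α → ℝ) : ℝ :=
  let e : Fin (Fintype.card α) ≃ α := (Fintype.equivFin α).symm
  let σ : Equiv.Perm (Fin (Fintype.card α)) := Tuple.sort (fun i => -(w (e i)))
  ∑ k : Fin (Fintype.card α),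
    w (e (σ k)) *
      (F ((Finset.univ.filter (fun j => j ≤ k)).image (fun j => e (σ j))) -
       F ((Finset.univ.filter (fun j => j < k)).image (fun j => e (σ j))))

/-- `Ω(w) = f(|w|)` where `f` is the Lovász extension of `F`. -/
noncomputable def OmegaF {α : Type*} [Fintype α] [DecidableEq α]
    (F : Finset α → ℝ) (w : α → ℝ) : ℝ :=
  lovasz F (fun i => |w i|)

/-- The dual norm `N*(s) = sup { ⟨s, w⟩ : N(w) ≤ 1 }`. -/
noncomputable def dualNorm {α : Type*} [Fintype α] (N : (α → ℝ) → ℝ) (s : α → ℝ) : ℝ :=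
  sSup {x : ℝ | ∃ w : α → ℝ, N w ≤ 1 ∧ x = ∑ i, s i * w i}

/-- The support of a vector, as a finset. -/
def suppF {α : Type*} [Fintype α] (w : α → ℝ) : Finset α :=
  Finset.univ.filter (fun i => w i ≠ 0)

/-- The restriction `F_J` of `F` to `J`, as a set-function on subsets of `J`. -/
def Frestrict {p : ℕ} (F : Finset (Fin p) → ℝ) (J : Finset (Fin p)) :
    Finset {x : Fin p // x ∈ J} → ℝ :=
  fun A => F (A.image Subtype.val)

/-- The contraction `F^J` of `F` by `J`: `F^J(A) = F(A ∪ J) − F(J)` for `A ⊆ Jᶜ`. -/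
def Fcontract {p : ℕ} (F : Finset (Fin p) → ℝ) (J : Finset (Fin p)) :
    Finset {x : Fin p // x ∈ Jᶜ} → ℝ :=
  fun A => F (A.image Subtype.val ∪ J) - F J


/-- The standard Gaussian measure on `ℝ^n` (i.i.d. standard normal coordinates). -/
noncomputable def stdGaussianPi (n : ℕ) : Measure (Fin n → ℝ) :=
  Measure.pi (fun _ => ProbabilityTheory.gaussianReal 0 1)

/-- `ρ(J) = min { (F(B ∪ J) − F(J)) / F(B) : ∅ ≠ B ⊆ Jᶜ }` (with `ρ(J) = 1` if `Jᶜ = ∅`). -/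
noncomputable def rhoJ {p : ℕ} (F : Finset (Fin p) → ℝ) (J : Finset (Fin p)) : ℝ :=
  if J = Finset.univ then 1
  else sInf {x : ℝ | ∃ B : Finset (Fin p), B.Nonempty ∧ B ⊆ Jᶜ ∧ x = (F (B ∪ J) - F J) / F B}

/-- `c(J) = sup { Ω_J(w_J) / ‖w_J‖₂ : 0 ≠ w_J ∈ ℝ^J }`. -/
noncomputable def cJ {p : ℕ} (F : Finset (Fin p) → ℝ) (J : Finset (Fin p)) : ℝ :=
  sSup {x : ℝ | ∃ w : {j : Fin p // j ∈ J} → ℝ, w ≠ 0 ∧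
    x = OmegaF (Frestrict F J) w / Real.sqrt (∑ i, w i ^ 2)}

/-- The regularized least-squares objective `w ↦ (1/(2n)) ‖y − Xw‖₂² + λ Ω(w)`. -/
noncomputable def lsObj {p n : ℕ} (F : Finset (Fin p) → ℝ) (X : Matrix (Fin n) (Fin p) ℝ)
    (lam : ℝ) (y : Fin n → ℝ) (w : Fin p → ℝ) : ℝ :=
  (1 / (2 * n)) * (∑ i, (y i - X.mulVec w i) ^ 2) + lam * OmegaF F w

/-! ### Greedy vectors and the Lovász extension -/

/-- The nonnegative part of the submodular polyhedron of `F`: vectors `s ≥ 0` with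
`s(A) ≤ F(A)` for every `A`. -/
def SubPoly {α : Type*} (F : Finset α → ℝ) (s : α → ℝ) : Prop :=
  (∀ i, 0 ≤ s i) ∧ ∀ A : Finset α, ∑ i ∈ A, s i ≤ F A

/-- The first `k` elements of `α` in the enumeration `j`. -/
def initSeg {α : Type*} [DecidableEq α] {m : ℕ} (j : Fin m ≃ α) (k : ℕ) : Finset α :=
  (Finset.univ.filter (fun i : Fin m => i.val < k)).image j

section Enumeration

variable {α : Type*} [DecidableEq α] {m : ℕ} (j : Fin m ≃ α)

lemma mem_initSeg (k : ℕ) (a : α) : a ∈ initSeg j k ↔ (j.symm a).val < k := by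
  simp only [initSeg, mem_image, mem_filter, mem_univ, true_and]
  constructor
  · rintro ⟨i, hi, rfl⟩
    simpa using hi
  · intro h
    exact ⟨j.symm a, h, by simp⟩

lemma initSeg_zero : initSeg j 0 = ∅ := by
  ext a; simp [mem_initSeg]

lemma initSeg_succ (k : ℕ) (hk : k < m) :
    initSeg j (k + 1) = insert (j ⟨k, hk⟩) (initSeg j k) := by
  ext a
  rw [mem_insert, mem_initSeg, mem_initSeg, ← Equiv.symm_apply_eq, Fin.ext_iff]
  simp only
  omega

lemma initSeg_notMem (k : ℕ) (hk : k < m) : j ⟨k, hk⟩ ∉ initSeg j k := by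
  simp [mem_initSeg]

/-- Edmonds' greedy vector: the marginal gains of `F` along an enumeration belong to the
submodular polyhedron. -/
lemma greedy_subPoly {F : Finset α → ℝ} (hs : Submodular F) (hm : MonotoneF F) (h0 : F ∅ = 0) :
    SubPoly F (fun a => F (initSeg j ((j.symm a).val + 1)) - F (initSeg j (j.symm a).val)) := by
  refine ⟨fun a => sub_nonneg.2 (hm fun b hb => ?_), fun A => ?_⟩
  · rw [mem_initSeg] at hb ⊢
    omega
  set s : α → ℝ := fun a => F (initSeg j ((j.symm a).val + 1)) - F (initSeg j (j.symm a).val)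
    with hsdef
  have key : ∀ k ≤ m, ∑ i ∈ A ∩ initSeg j k, s i ≤ F (A ∩ initSeg j k) := by
    intro k
    induction k with
    | zero => intro _; simp [initSeg_zero, h0]
    | succ k ih =>
      intro hk
      have hk' : k < m := hk
      have ih := ih hk'.le
      by_cases hA : j ⟨k, hk'⟩ ∈ A
      · have hnot : j ⟨k, hk'⟩ ∉ A ∩ initSeg j k := fun h =>
          initSeg_notMem j k hk' (mem_inter.1 h).2
        have e1 : A ∩ initSeg j (k + 1) = insert (j ⟨k, hk'⟩) (A ∩ initSeg j k) := by
          rw [initSeg_succ j k hk', inter_insert_of_mem hA]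
        have e2 : (A ∩ initSeg j (k + 1)) ∪ initSeg j k = initSeg j (k + 1) := by
          rw [e1, initSeg_succ j k hk']
          ext a; simp only [mem_union, mem_insert, mem_inter]; tauto
        have e3 : (A ∩ initSeg j (k + 1)) ∩ initSeg j k = A ∩ initSeg j k := by
          rw [initSeg_succ j k hk']
          ext a; simp only [mem_insert, mem_inter]; tauto
        have := hs (A ∩ initSeg j (k + 1)) (initSeg j k)
        rw [e2, e3] at this
        have e4 : s (j ⟨k, hk'⟩) = F (initSeg j (k + 1)) - F (initSeg j k) := by
          simp [hsdef]
        have e5 : ∑ i ∈ A ∩ initSeg j (k + 1), s i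
            = s (j ⟨k, hk'⟩) + ∑ i ∈ A ∩ initSeg j k, s i := by
          rw [e1, sum_insert hnot]
        linarith
      · have e1 : A ∩ initSeg j (k + 1) = A ∩ initSeg j k := by
          rw [initSeg_succ j k hk', inter_insert_of_notMem hA]
        rw [e1]; exact ih
  have := key m le_rfl
  have e : A ∩ initSeg j m = A := by
    ext a; simp [mem_initSeg]
  rwa [e] at this

/-- Abel summation: among the vectors of the submodular polyhedron, the greedy one maximizes a
nonnegative linear form whose coefficients decrease along the enumeration. -/
lemma greedy_max {F : Finset α → ℝ} [Fintype α] (h0 : F ∅ = 0) {w s : α → ℝ} (hw : ∀ a, 0 ≤ w a)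
    (hanti : Antitone (w ∘ j)) (hs : SubPoly F s) :
    ∑ a, s a * w a ≤
      ∑ k : Fin m, w (j k) * (F (initSeg j (k.val + 1)) - F (initSeg j k.val)) := by
  -- the weights along the enumeration, padded by zeros
  set u : ℕ → ℝ := fun k => if h : k < m then w (j ⟨k, h⟩) else 0 with hu
  have hu0 : ∀ k, 0 ≤ u k := by
    intro k; simp only [hu]; split_ifs
    · exact hw _
    · exact le_rfl
  have hustep : ∀ k, u (k + 1) ≤ u k := by
    intro k
    by_cases h : k + 1 < m
    · have h' : k < m := by omega
      simp only [hu, h, h', dif_pos]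
      exact hanti (show (⟨k, h'⟩ : Fin m) ≤ ⟨k + 1, h⟩ by simp)
    · have : u (k + 1) = 0 := by simp [hu, h]
      rw [this]; exact hu0 k
  set G : ℕ → ℝ := fun k => F (initSeg j k) - ∑ a ∈ initSeg j k, s a with hG
  have hG0 : ∀ k, 0 ≤ G k := fun k => sub_nonneg.2 (hs.2 _)
  have key : ∀ N, u N * G N ≤ ∑ k ∈ range N, u k * (G (k + 1) - G k) := by
    intro N
    induction N with
    | zero => simp [hG, initSeg_zero, h0]
    | succ N ih =>
      rw [sum_range_succ]
      nlinarith [mul_le_mul_of_nonneg_right (hustep N) (hG0 (N + 1))]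
  have hpos : 0 ≤ ∑ k ∈ range m, u k * (G (k + 1) - G k) :=
    (mul_nonneg (hu0 m) (hG0 m)).trans (key m)
  rw [← Fin.sum_univ_eq_sum_range (fun k => u k * (G (k + 1) - G k))] at hpos
  have hterm : ∀ k : Fin m, u k * (G (k + 1) - G k) =
      w (j k) * (F (initSeg j (k.val + 1)) - F (initSeg j k.val)) - s (j k) * w (j k) := by
    intro k
    have e : ∑ a ∈ initSeg j (k.val + 1), s a = s (j k) + ∑ a ∈ initSeg j k.val, s a := by
      rw [initSeg_succ j k.val k.2, sum_insert (initSeg_notMem j k.val k.2)]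
    simp only [hu, hG, k.2, dif_pos, e, Fin.eta]
    ring
  rw [sum_congr rfl fun k _ => hterm k, sum_sub_distrib] at hpos
  have e : ∑ a, s a * w a = ∑ k : Fin m, s (j k) * w (j k) :=
    (Equiv.sum_comp j fun a => s a * w a).symm
  linarith

end Enumeration

lemma nonneg_of_mono {α : Type*} {F : Finset α → ℝ} (hm : MonotoneF F) (h0 : F ∅ = 0) (A : Finset α) :
    0 ≤ F A := h0 ▸ hm (empty_subset A)

section Omega

variable {α : Type*} [Fintype α] [DecidableEq α]

/-- The sorting permutation in the definition of `lovasz`, packaged as an enumeration of `α`. -/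
lemma exists_enum (F : Finset α → ℝ) (w : α → ℝ) :
    ∃ j : Fin (Fintype.card α) ≃ α, Antitone (w ∘ j) ∧
      lovasz F w = ∑ k, w (j k) * (F (initSeg j (k.val + 1)) - F (initSeg j k.val)) := by
  refine ⟨(Tuple.sort fun i => -(w ((Fintype.equivFin α).symm i))).trans
    (Fintype.equivFin α).symm, ?_, ?_⟩
  · intro a b hab
    have := Tuple.monotone_sort (fun i => -(w ((Fintype.equivFin α).symm i))) hab
    simpa using this
  · unfold lovasz
    refine sum_congr rfl fun k _ => ?_
    simp only [initSeg, Nat.lt_succ_iff]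
    rfl

/-- `Ω(w)` is attained by a linear form in `|w|` from the submodular polyhedron. -/
lemma omega_exists {F : Finset α → ℝ} (hs : Submodular F) (hm : MonotoneF F) (h0 : F ∅ = 0)
    (w : α → ℝ) : ∃ s, SubPoly F s ∧ OmegaF F w = ∑ i, s i * |w i| := by
  obtain ⟨j, -, hj⟩ := exists_enum F (fun i => |w i|)
  refine ⟨_, greedy_subPoly j hs hm h0, ?_⟩
  rw [OmegaF, hj, ← Equiv.sum_comp j]
  refine sum_congr rfl fun k _ => ?_
  rw [Equiv.symm_apply_apply, mul_comm]

/-- Together with `omega_exists`: `Ω` is the support function, in `|w|`, of the submodular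
polyhedron. -/
lemma omega_ge {F : Finset α → ℝ} (h0 : F ∅ = 0) {s : α → ℝ} (hs : SubPoly F s) (w : α → ℝ) :
    ∑ i, s i * |w i| ≤ OmegaF F w := by
  obtain ⟨j, hj, he⟩ := exists_enum F (fun i => |w i|)
  rw [OmegaF, he]
  exact greedy_max j h0 (fun a => abs_nonneg (w a)) hj hs

lemma omega_triangle {F : Finset α → ℝ} (hs : Submodular F) (hm : MonotoneF F) (h0 : F ∅ = 0)
    (u v : α → ℝ) : OmegaF F u ≤ OmegaF F v + OmegaF F (fun i => v i - u i) := by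
  obtain ⟨s, hsP, he⟩ := omega_exists hs hm h0 u
  have h1 := omega_ge h0 hsP v
  have h2 := omega_ge h0 hsP (fun i => v i - u i)
  rw [he]
  refine le_trans ?_ (add_le_add h1 h2)
  rw [← sum_add_distrib]
  refine sum_le_sum fun i _ => ?_
  rw [← mul_add]
  refine mul_le_mul_of_nonneg_left ?_ (hsP.1 i)
  have := abs_sub_abs_le_abs_sub (u i) (v i)
  rw [abs_sub_comm] at this
  linarith

lemma omega_smul_le {F : Finset α → ℝ} (hs : Submodular F) (hm : MonotoneF F) (h0 : F ∅ = 0)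
    {c : ℝ} (hc : 0 ≤ c) (w : α → ℝ) : OmegaF F (fun i => c * w i) ≤ c * OmegaF F w := by
  obtain ⟨s, hsP, he⟩ := omega_exists hs hm h0 (fun i => c * w i)
  rw [he]
  have : ∑ i, s i * |c * w i| = c * ∑ i, s i * |w i| := by
    rw [mul_sum]
    refine sum_congr rfl fun i _ => ?_
    rw [abs_mul, abs_of_nonneg hc]; ring
  rw [this]
  exact mul_le_mul_of_nonneg_left (omega_ge h0 hsP w) hc

lemma omega_nonneg {F : Finset α → ℝ} (hs : Submodular F) (hm : MonotoneF F) (h0 : F ∅ = 0)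
    (w : α → ℝ) : 0 ≤ OmegaF F w := by
  obtain ⟨s, hsP, he⟩ := omega_exists hs hm h0 w
  rw [he]
  exact sum_nonneg fun i _ => mul_nonneg (hsP.1 i) (abs_nonneg _)

lemma omega_coord {F : Finset α → ℝ} (hm : MonotoneF F) (h0 : F ∅ = 0)
    (w : α → ℝ) (k : α) : F {k} * |w k| ≤ OmegaF F w := by
  have hP : SubPoly F (fun i => if i = k then F {k} else 0) := by
    refine ⟨fun i => ?_, fun A => ?_⟩
    · simp only
      split_ifs
      · exact nonneg_of_mono hm h0 _
      · exact le_rfl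
    · rw [sum_ite_eq']
      split_ifs with h
      · exact hm (singleton_subset_iff.2 h)
      · exact nonneg_of_mono hm h0 _
  have := omega_ge h0 hP w
  simpa using this

lemma omega_le_sqrt {F : Finset α → ℝ} (hs : Submodular F) (hm : MonotoneF F) (h0 : F ∅ = 0)
    (w : α → ℝ) : OmegaF F w ≤ (∑ i, F {i}) * Real.sqrt (∑ i, w i ^ 2) := by
  obtain ⟨s, hsP, he⟩ := omega_exists hs hm h0 w
  rw [he, sum_mul]
  refine sum_le_sum fun i _ => ?_
  refine mul_le_mul ?_ ?_ (abs_nonneg _) (nonneg_of_mono hm h0 _)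
  · simpa using hsP.2 {i}
  · refine Real.abs_le_sqrt ?_
    exact single_le_sum (f := fun i => w i ^ 2) (fun i _ => sq_nonneg _) (mem_univ i)

/-- The dual norm is a finite supremum when all singletons have positive value, so that the
generalized Hölder inequality `⟨q, w⟩ ≤ Ω*(q) Ω(w)` holds. -/
lemma dualNorm_holder {F : Finset α → ℝ} (hs : Submodular F) (hm : MonotoneF F) (h0 : F ∅ = 0)
    (hpos : ∀ k, 0 < F {k}) (q w : α → ℝ) :
    ∑ i, q i * w i ≤ dualNorm (OmegaF F) q * OmegaF F w := by
  have hbdd : BddAbove {x : ℝ | ∃ w : α → ℝ, OmegaF F w ≤ 1 ∧ x = ∑ i, q i * w i} := by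
    refine ⟨∑ i, |q i| * (F {i})⁻¹, ?_⟩
    rintro x ⟨v, hv, rfl⟩
    refine sum_le_sum fun i _ => ?_
    refine (le_abs_self _).trans ?_
    rw [abs_mul]
    refine mul_le_mul_of_nonneg_left ?_ (abs_nonneg _)
    rw [← one_div, le_div_iff₀ (hpos i), mul_comm]
    exact (omega_coord hm h0 v i).trans hv
  rcases (omega_nonneg hs hm h0 w).eq_or_lt with h | h
  · have hw : ∀ i, w i = 0 := by
      intro i
      have := omega_coord hm h0 w i
      rw [← h] at this
      have h2 : |w i| ≤ 0 := by
        by_contra hc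
        push Not at hc
        exact absurd this (not_le.2 (mul_pos (hpos i) hc))
      exact abs_nonpos_iff.1 h2
    simp [hw, ← h]
  · have h1 : OmegaF F (fun i => (OmegaF F w)⁻¹ * w i) ≤ 1 := by
      refine (omega_smul_le hs hm h0 (inv_nonneg.2 h.le) w).trans ?_
      rw [inv_mul_cancel₀ h.ne']
    have h2 := le_csSup hbdd ⟨_, h1, rfl⟩
    have h3 : ∑ i, q i * ((OmegaF F w)⁻¹ * w i) = (∑ i, q i * w i) / OmegaF F w := by
      rw [sum_div]
      refine sum_congr rfl fun i _ => ?_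
      rw [div_eq_mul_inv]; ring
    rw [h3, div_le_iff₀ h] at h2
    exact h2

end Omega

/-! ### Decomposition of the norm along a stable set -/

section Decomposition

variable {p : ℕ} {F : Finset (Fin p) → ℝ} {J : Finset (Fin p)}

lemma frestrict_submodular (hs : Submodular F) : Submodular (Frestrict F J) := by
  intro A B
  have := hs (A.image Subtype.val) (B.image Subtype.val)
  rw [← image_union, ← image_inter _ _ Subtype.val_injective] at this
  exact this

lemma frestrict_mono (hm : MonotoneF F) : MonotoneF (Frestrict F J) :=
  fun _ _ h => hm (image_subset_image h)

lemma frestrict_empty (h0 : F ∅ = 0) : Frestrict F J ∅ = 0 := by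
  simp [Frestrict, h0]

lemma fcontract_submodular (hs : Submodular F) : Submodular (Fcontract F J) := by
  intro A B
  have := hs (A.image Subtype.val ∪ J) (B.image Subtype.val ∪ J)
  rw [← union_union_distrib_right, ← inter_union_distrib_right, ← image_union,
    ← image_inter _ _ Subtype.val_injective] at this
  simp only [Fcontract]
  linarith

lemma fcontract_mono (hm : MonotoneF F) : MonotoneF (Fcontract F J) :=
  fun _ _ h => sub_le_sub_right (hm (union_subset_union_left (image_subset_image h))) _

lemma fcontract_empty : Fcontract F J ∅ = 0 := by
  simp [Fcontract]

lemma sum_split (J : Finset (Fin p)) (g : Fin p → ℝ) :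
    ∑ i, g i = ∑ i : {x // x ∈ J}, g i.1 + ∑ i : {x // x ∈ Jᶜ}, g i.1 := by
  rw [← sum_add_sum_compl J g, ← sum_coe_sort J g, ← sum_coe_sort Jᶜ g]

lemma SubPoly.frestrict {s : Fin p → ℝ} (hs : SubPoly F s) :
    SubPoly (Frestrict F J) (fun i => s i.1) := by
  refine ⟨fun i => hs.1 _, fun A => ?_⟩
  rw [← sum_image (f := s) (g := Subtype.val) (fun x _ y _ h => Subtype.ext h)]
  exact hs.2 _

/-- The lower bound `Ω_J(w_J) + Ω^J(w_{Jᶜ}) ≤ Ω(w)`: maximizing vectors on `J` and on `Jᶜ`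
concatenate, by submodularity, to a vector of the submodular polyhedron of `F`. -/
lemma omega_decomp_le (hs : Submodular F) (hm : MonotoneF F) (h0 : F ∅ = 0) (w : Fin p → ℝ) :
    OmegaF (Frestrict F J) (fun j => w j.1) + OmegaF (Fcontract F J) (fun j => w j.1) ≤
      OmegaF F w := by
  obtain ⟨s, hsP, he⟩ := omega_exists (frestrict_submodular (J := J) hs) (frestrict_mono hm)
    (frestrict_empty h0) (fun j => w j.1)
  obtain ⟨t, htP, hte⟩ := omega_exists (fcontract_submodular (J := J) hs) (fcontract_mono hm)
    fcontract_empty (fun j => w j.1)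
  set r : Fin p → ℝ := fun i => if h : i ∈ J then s ⟨i, h⟩ else t ⟨i, mem_compl.2 h⟩ with hr
  have hrJ : ∀ i : {x // x ∈ J}, r i.1 = s i := fun i => by simp [hr]
  have hrC : ∀ i : {x // x ∈ Jᶜ}, r i.1 = t i := fun i => by
    have : i.1 ∉ J := mem_compl.1 i.2
    simp [hr, this]
  have hP : SubPoly F r := by
    refine ⟨fun i => ?_, fun A => ?_⟩
    · simp only [hr]
      split_ifs
      · exact hsP.1 _
      · exact htP.1 _
    have e1 : ∑ i ∈ A ∩ J, r i ≤ F (A ∩ J) := by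
      have hi : (A.subtype (· ∈ J)).image Subtype.val = A ∩ J := by
        ext a; simp
      have := hsP.2 (A.subtype (· ∈ J))
      rw [Frestrict, hi, ← sum_congr rfl fun i _ => hrJ i,
        ← sum_image (f := r) (g := Subtype.val) (fun x _ y _ h => Subtype.ext h), hi] at this
      exact this
    have e2 : ∑ i ∈ A \ J, r i ≤ F (A ∪ J) - F J := by
      have hi : (A.subtype (· ∈ Jᶜ)).image Subtype.val = A \ J := by
        ext a; simp
      have := htP.2 (A.subtype (· ∈ Jᶜ))
      rw [Fcontract, hi, ← sum_congr rfl fun i _ => hrC i,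
        ← sum_image (f := r) (g := Subtype.val) (fun x _ y _ h => Subtype.ext h), hi,
        sdiff_union_self_eq_union] at this
      exact this
    have e3 := sum_inter_add_sum_sdiff A J r
    have e4 := hs A J
    linarith
  refine le_trans (le_of_eq ?_) (omega_ge h0 hP w)
  rw [he, hte, sum_split J]
  simp only [hrJ, hrC]

/-- Restricting a maximizing vector to `J` loses nothing when `w` is supported in `J`. -/
lemma omega_supported (hs : Submodular F) (hm : MonotoneF F) (h0 : F ∅ = 0) (w : Fin p → ℝ)
    (hw : suppF w ⊆ J) : OmegaF F w ≤ OmegaF (Frestrict F J) (fun j => w j.1) := by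
  obtain ⟨s, hsP, he⟩ := omega_exists hs hm h0 w
  refine le_trans (le_of_eq ?_) (omega_ge (frestrict_empty h0) (hsP.frestrict (J := J)) _)
  rw [he, sum_split J, add_eq_left]
  refine sum_eq_zero fun i _ => ?_
  have : w i.1 = 0 := by
    by_contra h
    exact mem_compl.1 i.2 (hw (by simp [suppF, h]))
  simp [this]

/-- The upper bound `ρ Ω(w) ≤ ρ Ω_J(w_J) + Ω^J(w_{Jᶜ})`, whenever `ρ F(B) ≤ F(B ∪ J) - F(J)` for
all `B ⊆ Jᶜ`. -/
lemma omega_le_decomp (hs : Submodular F) (hm : MonotoneF F) (h0 : F ∅ = 0) {r : ℝ} (hr0 : 0 ≤ r)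
    (hr : ∀ B ⊆ Jᶜ, r * F B ≤ F (B ∪ J) - F J) (w : Fin p → ℝ) :
    r * OmegaF F w ≤
      r * OmegaF (Frestrict F J) (fun j => w j.1) + OmegaF (Fcontract F J) (fun j => w j.1) := by
  obtain ⟨s, hsP, he⟩ := omega_exists hs hm h0 w
  have h1 := omega_ge (frestrict_empty h0) (hsP.frestrict (J := J)) (fun j => w j.1)
  have hP : SubPoly (Fcontract F J) (fun i => r * s i.1) := by
    refine ⟨fun i => mul_nonneg hr0 (hsP.1 _), fun A => ?_⟩
    rw [← mul_sum, ← sum_image (f := s) (g := Subtype.val) (fun x _ y _ h => Subtype.ext h)]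
    refine (mul_le_mul_of_nonneg_left (hsP.2 _) hr0).trans (hr _ ?_)
    intro a ha
    obtain ⟨b, -, rfl⟩ := mem_image.1 ha
    exact b.2
  have h2 := omega_ge fcontract_empty hP (fun j => w j.1)
  simp only [mul_assoc, ← mul_sum] at h2
  rw [he, sum_split J, mul_add]
  exact add_le_add (mul_le_mul_of_nonneg_left h1 hr0) h2

/-- Stability of `J` gives `ρ(J) > 0`, and submodularity gives `ρ(J) ≤ 1`. -/
lemma rhoJ_spec (hs : Submodular F) (hm : MonotoneF F) (h0 : F ∅ = 0) (hpos : ∀ k, 0 < F {k})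
    (hJ : StableSet F J) :
    0 < rhoJ F J ∧ rhoJ F J ≤ 1 ∧ ∀ B ⊆ Jᶜ, rhoJ F J * F B ≤ F (B ∪ J) - F J := by
  have hFB : ∀ B : Finset (Fin p), B.Nonempty → 0 < F B := fun B ⟨k, hk⟩ =>
    (hpos k).trans_le (hm (singleton_subset_iff.2 hk))
  by_cases hu : J = univ
  · rw [rhoJ, if_pos hu]
    refine ⟨one_pos, le_rfl, fun B hB => ?_⟩
    have : B = ∅ := by
      rw [hu, compl_univ] at hB
      exact subset_empty.1 hB
    simp [this, h0]
  rw [rhoJ, if_neg hu]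
  set S := {x : ℝ | ∃ B : Finset (Fin p), B.Nonempty ∧ B ⊆ Jᶜ ∧ x = (F (B ∪ J) - F J) / F B}
    with hS
  have hfin : S.Finite := by
    refine (Set.finite_range fun B : Finset (Fin p) => (F (B ∪ J) - F J) / F B).subset ?_
    rintro x ⟨B, -, -, rfl⟩
    exact ⟨B, rfl⟩
  have hne : S.Nonempty := by
    refine ⟨_, Jᶜ, ?_, Subset.rfl, rfl⟩
    rw [nonempty_iff_ne_empty, Ne, compl_eq_empty_iff]
    exact hu
  have hle : ∀ x ∈ S, x ≤ 1 := by
    rintro x ⟨B, hB, hBJ, rfl⟩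
    rw [div_le_one (hFB B hB)]
    have := hs B J
    have := nonneg_of_mono hm h0 (B ∩ J)
    linarith
  refine ⟨?_, ?_, ?_⟩
  · obtain ⟨B, hB, hBJ, he⟩ := hne.csInf_mem hfin
    rw [he]
    refine div_pos (sub_pos.2 (hJ _ subset_union_right fun h => ?_)) (hFB B hB)
    obtain ⟨k, hk⟩ := hB
    exact mem_compl.1 (hBJ hk) (h ▸ mem_union_left _ hk)
  · obtain ⟨x, hx⟩ := hne
    exact (csInf_le hfin.bddBelow hx).trans (hle x hx)
  · intro B hBJ
    rcases B.eq_empty_or_nonempty with rfl | hB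
    · simp [h0]
    · rw [← le_div_iff₀ (hFB B hB)]
      exact csInf_le hfin.bddBelow ⟨B, hB, hBJ, rfl⟩

/-- The supremum defining `c(J)` is finite, so `Ω_J ≤ c(J) ‖·‖₂`; this includes `J = ∅`, where the
set is empty and `c(J) = 0`. -/
lemma omega_le_cJ (hs : Submodular F) (hm : MonotoneF F) (h0 : F ∅ = 0)
    (w : {x // x ∈ J} → ℝ) :
    0 ≤ cJ F J ∧ OmegaF (Frestrict F J) w ≤ cJ F J * Real.sqrt (∑ i, w i ^ 2) := by
  have hle := omega_le_sqrt (frestrict_submodular (J := J) hs) (frestrict_mono hm)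
    (frestrict_empty h0)
  have hnn := omega_nonneg (frestrict_submodular (J := J) hs) (frestrict_mono hm)
    (frestrict_empty h0)
  have hsq : ∀ v : {x // x ∈ J} → ℝ, v ≠ 0 → 0 < Real.sqrt (∑ i, v i ^ 2) := by
    intro v hv
    obtain ⟨i, hi⟩ := Function.ne_iff.1 hv
    refine Real.sqrt_pos.2 (sum_pos' (fun i _ => sq_nonneg _) ⟨i, mem_univ i, ?_⟩)
    exact sq_pos_of_ne_zero hi
  refine ⟨Real.sSup_nonneg ?_, ?_⟩
  · rintro x ⟨v, -, rfl⟩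
    exact div_nonneg (hnn v) (Real.sqrt_nonneg _)
  by_cases hw : w = 0
  · have := hle w
    simp only [hw, Pi.zero_apply] at this ⊢
    simpa using this
  · rw [← div_le_iff₀ (hsq w hw)]
    refine le_csSup ⟨∑ i, Frestrict F J {i}, ?_⟩ ⟨w, hw, rfl⟩
    rintro x ⟨v, hv, rfl⟩
    rw [div_le_iff₀ (hsq v hv)]
    exact hle v

end Decomposition

/-! ### Laws of linear images of Gaussian vectors -/

section Gaussian

open ProbabilityTheory
open scoped Matrix

/-- The characteristic function of `A g`, for `g` a standard Gaussian vector, at the linear form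
with coefficients `ℓ` is `exp (-ℓᵀ A Aᵀ ℓ / 2)`. -/
lemma stdGaussianPi_charFunDual {p m : ℕ} (A : Matrix (Fin p) (Fin m) ℝ)
    (L : StrongDual ℝ (Fin p → ℝ)) :
    charFunDual (Measure.map (fun g => A.mulVec g) (stdGaussianPi m)) L =
      Complex.exp (-(((fun i => L (Pi.single i 1)) ⬝ᵥ
        (A * A.transpose).mulVec (fun i => L (Pi.single i 1)) : ℝ) / 2 : ℂ)) := by
  set l : Fin p → ℝ := fun i => L (Pi.single i 1) with hl
  have hL : ∀ z : Fin p → ℝ, L z = l ⬝ᵥ z := by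
    intro z
    conv_lhs => rw [pi_eq_sum_univ' z]
    simp [hl, dotProduct, mul_comm]
  have hmap : charFunDual (Measure.map (fun g => A.mulVec g) (stdGaussianPi m)) L =
      charFunDual (stdGaussianPi m) (L.comp (Matrix.mulVecLin A).toContinuousLinearMap) :=
    charFunDual_map (Matrix.mulVecLin A).toContinuousLinearMap L
  have hgauss : ∀ M : StrongDual ℝ ℝ,
      charFunDual (gaussianReal 0 1) M = Complex.exp (-((M 1) ^ 2 / 2 : ℝ)) := by
    intro M
    have h1 : charFunDual (gaussianReal 0 1) M = charFun (gaussianReal 0 1) (M 1) := by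
      rw [charFunDual_apply, charFun_apply_real]
      refine integral_congr_ae (ae_of_all _ fun x => ?_)
      have : M x = M 1 * x := by
        conv_lhs => rw [← mul_one x, ← smul_eq_mul, map_smul, smul_eq_mul, mul_comm]
      simp [this]
    rw [h1, charFun_gaussianReal]
    push_cast
    congr 1
    simp
  rw [hmap, stdGaussianPi, charFunDual_pi]
  simp only [hgauss]
  rw [← Complex.exp_sum]
  congr 1
  have hc : ∀ i : Fin m, (L.comp (Matrix.mulVecLin A).toContinuousLinearMap).comp
      (.single ℝ (fun _ => ℝ) i) 1 = (l ᵥ* A) i := by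
    intro i
    simp only [ContinuousLinearMap.comp_apply]
    rw [hL]
    change l ⬝ᵥ A.mulVec (Pi.single i 1) = _
    rw [Matrix.mulVec_single_one]
    rfl
  simp only [hc]
  rw [← Matrix.mulVec_mulVec, Matrix.dotProduct_mulVec, Matrix.mulVec_transpose]
  push_cast [dotProduct]
  rw [sum_div, ← sum_neg_distrib]
  refine sum_congr rfl fun i _ => ?_
  ring

/-- A linear image of a standard Gaussian vector has a law depending only on its covariance
matrix. -/
lemma map_stdGaussianPi_eq {p m m' : ℕ} (A : Matrix (Fin p) (Fin m) ℝ)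
    (B : Matrix (Fin p) (Fin m') ℝ) (h : A * A.transpose = B * B.transpose) :
    Measure.map (fun g => A.mulVec g) (stdGaussianPi m) =
      Measure.map (fun g => B.mulVec g) (stdGaussianPi m') := by
  have : IsProbabilityMeasure (stdGaussianPi m) := by unfold stdGaussianPi; infer_instance
  have : IsProbabilityMeasure (stdGaussianPi m') := by unfold stdGaussianPi; infer_instance
  refine Measure.ext_of_charFunDual ?_
  ext L
  rw [stdGaussianPi_charFunDual, stdGaussianPi_charFunDual, h]

end Gaussian

/-! ### Deterministic analysis and conclusion -/

/-- Optimality of `w` against `wstar`, with the squares expanded; the noise enters only through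
`Xᵀε`. -/
lemma basic_inequality {p n : ℕ} (hn : 1 ≤ n) (F : Finset (Fin p) → ℝ)
    (X : Matrix (Fin n) (Fin p) ℝ) (wstar w : Fin p → ℝ) (sigma lam : ℝ) (ε : Fin n → ℝ)
    (hopt : lsObj F X lam (fun i => X.mulVec wstar i + sigma * ε i) w ≤
      lsObj F X lam (fun i => X.mulVec wstar i + sigma * ε i) wstar) :
    (1 / (n : ℝ)) * (∑ i, (X.mulVec w i - X.mulVec wstar i) ^ 2) / 2 ≤
      sigma / n * (∑ j, X.transpose.mulVec ε j * (w j - wstar j)) +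
        lam * (OmegaF F wstar - OmegaF F w) := by
  have hn' : (0 : ℝ) < n := by exact_mod_cast hn
  have e1 : ∑ j, X.transpose.mulVec ε j * (w j - wstar j) =
      ∑ i, ε i * (X.mulVec w i - X.mulVec wstar i) := by
    have := Matrix.dotProduct_mulVec ε X (w - wstar)
    rw [← Matrix.mulVec_transpose, Matrix.mulVec_sub] at this
    exact this.symm
  unfold lsObj at hopt
  have e2 : ∑ i, (X.mulVec wstar i + sigma * ε i - X.mulVec w i) ^ 2 =
      ∑ i, (X.mulVec wstar i + sigma * ε i - X.mulVec wstar i) ^ 2 +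
      (∑ i, (X.mulVec w i - X.mulVec wstar i) ^ 2) -
        2 * sigma * ∑ i, ε i * (X.mulVec w i - X.mulVec wstar i) := by
    rw [mul_sum, ← sum_add_distrib, ← sum_sub_distrib]
    refine sum_congr rfl fun i _ => ?_
    ring
  rw [e2] at hopt
  rw [e1]
  generalize (∑ i, (X.mulVec w i - X.mulVec wstar i) ^ 2) = T at *
  generalize ∑ i, ε i * (X.mulVec w i - X.mulVec wstar i) = U at *
  generalize ∑ i, (X.mulVec wstar i + sigma * ε i - X.mulVec wstar i) ^ 2 = V at *
  have e3 : 1 / (2 * (n : ℝ)) * (V + T - 2 * sigma * U) =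
      1 / (2 * (n : ℝ)) * V + 1 / n * T / 2 - sigma / n * U := by
    field_simp
  linarith

/-- The deterministic oracle inequality: on the event `Ω*(z) ≤ λ ρ(J) √n / (2σ)`, where
`z = Xᵀε / √n`, every minimizer satisfies both bounds. -/
lemma oracle_inequality {p n : ℕ} (hn : 1 ≤ n)
    (F : Finset (Fin p) → ℝ)
    (hs : Submodular F) (hm : MonotoneF F) (h0 : F ∅ = 0)
    (hpos : ∀ k : Fin p, 0 < F {k})
    (X : Matrix (Fin n) (Fin p) ℝ) (wstar : Fin p → ℝ) (sigma : ℝ) (hsigma : 0 < sigma)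
    (Q : Matrix (Fin p) (Fin p) ℝ) (hQ : Q = ((n : ℝ)⁻¹) • (X.transpose * X))
    (J : Finset (Fin p)) (hJ : StableSet F J) (hJsupp : suppF wstar ⊆ J)
    (kappa : ℝ) (hk : 0 < kappa)
    (hRE : ∀ Δ : Fin p → ℝ,
      OmegaF (Fcontract F J) (fun j : {x : Fin p // x ∈ Jᶜ} => Δ j.1) ≤
        3 * OmegaF (Frestrict F J) (fun j : {x : Fin p // x ∈ J} => Δ j.1) →
      kappa * (∑ j ∈ J, Δ j ^ 2) ≤ ∑ i, Δ i * Q.mulVec Δ i)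
    (lam : ℝ) (hlam : 0 < lam) (ε : Fin n → ℝ)
    (hε : dualNorm (OmegaF F) (((Real.sqrt n)⁻¹ • X.transpose).mulVec ε) ≤
      lam * rhoJ F J * Real.sqrt n / (2 * sigma))
    (w : Fin p → ℝ)
    (hopt : lsObj F X lam (fun i => X.mulVec wstar i + sigma * ε i) w ≤
      lsObj F X lam (fun i => X.mulVec wstar i + sigma * ε i) wstar) :
    OmegaF F (fun i => w i - wstar i) ≤ 24 * cJ F J ^ 2 * lam / (kappa * rhoJ F J ^ 2) ∧
      (1 / (n : ℝ)) * (∑ i, (X.mulVec w i - X.mulVec wstar i) ^ 2) ≤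
        36 * cJ F J ^ 2 * lam ^ 2 / (kappa * rhoJ F J ^ 2) := by
  have hn' : (0 : ℝ) < n := by exact_mod_cast hn
  have hsq : 0 < Real.sqrt n := Real.sqrt_pos.2 hn'
  have hsqn : Real.sqrt n * Real.sqrt n = n := Real.mul_self_sqrt hn'.le
  have hbasic := basic_inequality hn F X wstar w sigma lam ε hopt
  set D : Fin p → ℝ := fun i => w i - wstar i with hD
  obtain ⟨hr0, hr1, hrB⟩ := rhoJ_spec hs hm h0 hpos hJ
  have hT : ∑ i, D i * Q.mulVec D i =
      (1 / (n : ℝ)) * (∑ i, (X.mulVec w i - X.mulVec wstar i) ^ 2) := by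
    have h1 : X.mulVec D = X.mulVec w - X.mulVec wstar := Matrix.mulVec_sub X w wstar
    have h2 : ∑ i, D i * Q.mulVec D i = (n : ℝ)⁻¹ * (X.mulVec D ⬝ᵥ X.mulVec D) := by
      change D ⬝ᵥ Q.mulVec D = _
      rw [hQ, Matrix.smul_mulVec, dotProduct_smul, ← Matrix.mulVec_mulVec,
        Matrix.dotProduct_mulVec, Matrix.vecMul_transpose, smul_eq_mul]
    rw [h2, h1, one_div]
    simp only [dotProduct, Pi.sub_apply, sq]
  have hnoise : sigma / n * (∑ j, X.transpose.mulVec ε j * D j) ≤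
      lam * rhoJ F J / 2 * OmegaF F D := by
    have h1 := dualNorm_holder hs hm h0 hpos (((Real.sqrt n)⁻¹ • X.transpose).mulVec ε) D
    have h2 := h1.trans (mul_le_mul_of_nonneg_right hε (omega_nonneg hs hm h0 D))
    have h3 : ∑ i, ((Real.sqrt n)⁻¹ • X.transpose).mulVec ε i * D i =
        (Real.sqrt n)⁻¹ * ∑ j, X.transpose.mulVec ε j * D j := by
      rw [Matrix.smul_mulVec, mul_sum]
      refine sum_congr rfl fun i _ => ?_
      rw [Pi.smul_apply, smul_eq_mul, mul_assoc]
    rw [h3] at h2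
    have h4 := mul_le_mul_of_nonneg_left h2 (div_pos hsigma hsq).le
    refine le_trans (le_of_eq ?_) (h4.trans (le_of_eq ?_))
    · rw [← mul_assoc, ← div_eq_mul_inv, div_div, hsqn]
    · field_simp
  rw [← hT] at hbasic ⊢
  have hstar := omega_supported (J := J) hs hm h0 wstar hJsupp
  have hw := omega_decomp_le (J := J) hs hm h0 w
  have htri := omega_triangle (frestrict_submodular (J := J) hs) (frestrict_mono hm)
    (frestrict_empty h0) (fun j => wstar j.1) (fun j => w j.1)
  have hDdec := omega_le_decomp (J := J) hs hm h0 hr0.le hrB D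
  obtain ⟨hc0, hc⟩ := omega_le_cJ (J := J) hs hm h0 (fun j => D j.1)
  -- `wstar` vanishes off `J`, so `w` and `D` agree there
  have hwD : (fun j : {x // x ∈ Jᶜ} => w j.1) = fun j => D j.1 := by
    funext j
    have : wstar j.1 = 0 := by
      by_contra h
      exact mem_compl.1 j.2 (hJsupp (by simp [suppF, h]))
    simp [hD, this]
  rw [hwD] at hw
  have hRED := hRE D
  have hTnn : 0 ≤ ∑ i, D i * Q.mulVec D i := by
    rw [hT]
    exact mul_nonneg (by positivity) (sum_nonneg fun i _ => sq_nonneg _)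
  have hsumJ : ∑ i : {x // x ∈ J}, D i.1 ^ 2 = ∑ j ∈ J, D j ^ 2 :=
    sum_coe_sort J fun i => D i ^ 2
  rw [hsumJ] at hc
  have hnJ0 : 0 ≤ ∑ j ∈ J, D j ^ 2 := sum_nonneg fun i _ => sq_nonneg _
  have hNN := Real.sqrt_nonneg (∑ j ∈ J, D j ^ 2)
  have hNsq := Real.sq_sqrt hnJ0
  have ha0 := omega_nonneg (frestrict_submodular (J := J) hs) (frestrict_mono hm)
    (frestrict_empty h0) (fun j => D j.1)
  have hb0 := omega_nonneg (fcontract_submodular (J := J) hs) (fcontract_mono hm)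
    fcontract_empty (fun j => D j.1)
  have hd0 := omega_nonneg hs hm h0 D
  change OmegaF (Frestrict F J) (fun j => wstar j.1) ≤ OmegaF (Frestrict F J) (fun j => w j.1) +
    OmegaF (Frestrict F J) (fun j => D j.1) at htri
  generalize (∑ i, D i * Q.mulVec D i) = T at *
  generalize OmegaF (Frestrict F J) (fun j => D j.1) = a at *
  generalize OmegaF (Fcontract F J) (fun j => D j.1) = b at *
  generalize rhoJ F J = r at *
  generalize cJ F J = c at *
  generalize OmegaF F D = d at *
  generalize hN : Real.sqrt (∑ j ∈ J, D j ^ 2) = N at *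
  rw [← hNsq] at hRED
  -- here `a = Ω_J(D_J)`, `b = Ω^J(D_{Jᶜ})`, `d = Ω(D)`, `N = ‖D_J‖₂` and `T = ‖XD‖² / n`
  have h1 : T / 2 ≤ lam / 2 * (r * a + b) + lam * (a - b) := by
    have h2 : lam * (OmegaF F wstar - OmegaF F w) ≤ lam * (a - b) :=
      mul_le_mul_of_nonneg_left (by linarith) hlam.le
    have h3 : lam * r / 2 * d ≤ lam / 2 * (r * a + b) := by
      have := mul_le_mul_of_nonneg_left hDdec (by positivity : 0 ≤ lam / 2)
      linarith
    linarith
  have hra : r * a ≤ a := by nlinarith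
  have h2 : T ≤ lam * (3 * a - b) := by
    have := mul_le_mul_of_nonneg_left hra hlam.le
    linarith
  -- nonnegativity of `T` forces the cone condition of the restricted eigenvalue hypothesis
  have hb3 : b ≤ 3 * a := by
    by_contra hcon
    have : lam * (3 * a - b) < 0 := mul_neg_of_pos_of_neg hlam (by linarith)
    linarith
  have hre := hRED hb3
  have hT3 : T ≤ 3 * lam * (c * N) := by
    have := mul_le_mul_of_nonneg_left hc hlam.le
    have := mul_nonneg hlam.le hb0
    linarith
  have hNle : kappa * N ≤ 3 * lam * c := by
    rcases hNN.eq_or_lt with h | h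
    · rw [← h, mul_zero]; positivity
    · have : (kappa * N) * N ≤ (3 * lam * c) * N := by nlinarith
      exact le_of_mul_le_mul_right this h
  have hr2 : r ^ 2 ≤ r := by nlinarith
  constructor
  · rw [le_div_iff₀ (by positivity)]
    have h4 : r * d ≤ 4 * (c * N) := by linarith
    have h5 : r * d * kappa ≤ 12 * lam * c ^ 2 := by
      have h6 := mul_le_mul_of_nonneg_right h4 hk.le
      have h7 := mul_le_mul_of_nonneg_left hNle (by positivity : 0 ≤ 4 * c)
      linarith
    have h8 : d * kappa * r ^ 2 ≤ d * kappa * r :=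
      mul_le_mul_of_nonneg_left hr2 (by positivity)
    have h9 : 0 ≤ lam * c ^ 2 := by positivity
    linarith
  · rw [le_div_iff₀ (by positivity)]
    have h5 : T * kappa ≤ 9 * lam ^ 2 * c ^ 2 := by
      have h6 := mul_le_mul_of_nonneg_right hT3 hk.le
      have h7 := mul_le_mul_of_nonneg_left hNle (by positivity : 0 ≤ 3 * lam * c)
      linarith
    have h8 : T * kappa * r ^ 2 ≤ T * kappa * 1 :=
      mul_le_mul_of_nonneg_left (by linarith) (by positivity)
    have h9 : 0 ≤ lam ^ 2 * c ^ 2 := by positivity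
    linarith

/-- consistency. Under the restricted eigenvalue condition, any minimizer
`ŵ` of the regularized least-squares problem satisfies
`Ω(ŵ − w*) ≤ 24 c(J)² λ/(κ ρ(J)²)` and `(1/n)‖Xŵ − Xw*‖₂² ≤ 36 c(J)² λ²/(κ ρ(J)²)`,
with probability at least `1 − P(Ω*(z) > λ ρ(J) √n/(2σ))`, where `z` is a centered Gaussian
vector with covariance `Q = XᵀX/n` (realized as `z = R g`, `R Rᵀ = Q`, `g` standard Gaussian,
and the noise `ε` is a standard Gaussian vector in `ℝ^n`). -/
theorem omega_consistency {p n : ℕ} (hp : 1 ≤ p) (hn : 1 ≤ n)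
    (F : Finset (Fin p) → ℝ)
    (hsubm : Submodular F) (hmono : MonotoneF F) (hF0 : F ∅ = 0)
    (hFpos : ∀ k : Fin p, 0 < F {k})
    (X : Matrix (Fin n) (Fin p) ℝ) (wstar : Fin p → ℝ) (sigma : ℝ) (hsigma : 0 < sigma)
    (Q : Matrix (Fin p) (Fin p) ℝ) (hQ : Q = ((n : ℝ)⁻¹) • (X.transpose * X))
    (J : Finset (Fin p)) (hJstable : StableSet F J) (hJsupp : suppF wstar ⊆ J)
    (hJmin : ∀ J' : Finset (Fin p), StableSet F J' → suppF wstar ⊆ J' → J ⊆ J')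
    (kappa : ℝ) (hkappapos : 0 < kappa)
    (hRE : ∀ Δ : Fin p → ℝ,
      OmegaF (Fcontract F J) (fun j : {x : Fin p // x ∈ Jᶜ} => Δ j.1) ≤
        3 * OmegaF (Frestrict F J) (fun j : {x : Fin p // x ∈ J} => Δ j.1) →
      kappa * (∑ j ∈ J, Δ j ^ 2) ≤ ∑ i, Δ i * Q.mulVec Δ i)
    (lam : ℝ) (hlam : 0 < lam)
    (R : Matrix (Fin p) (Fin p) ℝ) (hR : R * R.transpose = Q) :
    1 - (Measure.map (fun g => R.mulVec g) (stdGaussianPi p))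
          {z : Fin p → ℝ | lam * rhoJ F J * Real.sqrt n / (2 * sigma) < dualNorm (OmegaF F) z}
      ≤ (stdGaussianPi n)
          {ε : Fin n → ℝ | ∀ w : Fin p → ℝ,
            (∀ w' : Fin p → ℝ,
              lsObj F X lam (fun i => X.mulVec wstar i + sigma * ε i) w ≤
                lsObj F X lam (fun i => X.mulVec wstar i + sigma * ε i) w') →
            OmegaF F (fun i => w i - wstar i) ≤
                24 * cJ F J ^ 2 * lam / (kappa * rhoJ F J ^ 2) ∧
              (1 / (n : ℝ)) * (∑ i, (X.mulVec w i - X.mulVec wstar i) ^ 2) ≤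
                36 * cJ F J ^ 2 * lam ^ 2 / (kappa * rhoJ F J ^ 2)} := by
  set A : Matrix (Fin p) (Fin n) ℝ := (Real.sqrt n)⁻¹ • X.transpose with hA
  have hcov : R * R.transpose = A * A.transpose := by
    rw [hR, hQ, hA, Matrix.transpose_smul, Matrix.transpose_transpose, Matrix.smul_mul,
      Matrix.mul_smul, smul_smul, ← mul_inv, Real.mul_self_sqrt (Nat.cast_nonneg n)]
  rw [map_stdGaussianPi_eq R A hcov]
  have : IsProbabilityMeasure (stdGaussianPi n) := by unfold stdGaussianPi; infer_instance
  set B : Set (Fin p → ℝ) :=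
    {z | lam * rhoJ F J * Real.sqrt n / (2 * sigma) < dualNorm (OmegaF F) z}
  have hmeas : AEMeasurable (fun g : Fin n → ℝ => A.mulVec g) (stdGaussianPi n) :=
    (Continuous.matrix_mulVec continuous_const continuous_id).aemeasurable
  rw [tsub_le_iff_right, ← measure_univ (μ := stdGaussianPi n)]
  -- the good event and the preimage of the bad event cover the whole space; subadditivity of
  -- outer measures makes the measurability of these events irrelevant
  refine le_trans ?_ (add_le_add le_rfl (Measure.le_map_apply hmeas B))
  refine (measure_mono fun ε _ => ?_).trans (measure_union_le _ _)
  by_cases hε : A.mulVec ε ∈ B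
  · exact Or.inr hε
  · exact Or.inl fun w hw => oracle_inequality hn F hsubm hmono hF0 hFpos X wstar sigma hsigma Q hQ J
      hJstable hJsupp kappa hkappapos hRE lam hlam ε (not_lt.1 hε) w (hw wstar)
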